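/- arXiv:1802.05990 — 3 statements merged into one kernel-verified Lean document; each statement's English description precedes it below -/
import Mathlib

section
/- For all positive integers n, the determinant of the n×n Hankel matrix whose (i,j) entry is binomial(i+j+1, floor((i+j+1)/2)) equals (-1)^{floor(n/2)}. -/
/-- Number of paths of length `i` ending at height `k`, with a loop at `0`. -/
def LL (i k : ℕ) : ℤ := (i.choose ((i + k + 1) / 2) : ℤ)

lemma LL_zero_of_lt {i k : ℕ} (h : i < k) : LL i k = 0 := by
  unfold LL
  rw [Nat.choose_eq_zero_of_lt (by omega)]; rfl

lemma LL_succ_succ (i k : ℕ) : LL (i + 1) (k + 1) = LL i k + LL i (k + 2) := by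
  unfold LL
  rw [show (i + 1 + (k + 1) + 1) / 2 = (i + k + 1) / 2 + 1 by omega,
    show (i + (k + 2) + 1) / 2 = (i + k + 1) / 2 + 1 by omega, Nat.choose_succ_succ]
  push_cast; rfl

lemma LL_zero_eq (i : ℕ) : LL i 0 = (i.choose (i / 2) : ℤ) := by
  unfold LL
  rw [← Nat.choose_symm (show i / 2 ≤ i by omega), show (i + 0 + 1) / 2 = i - i / 2 by omega]

lemma LL_succ_zero (i : ℕ) : LL (i + 1) 0 = LL i 0 + LL i 1 := by
  rw [LL_zero_eq i]
  unfold LL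
  rw [show (i + 1 + 0 + 1) / 2 = i / 2 + 1 by omega,
    Nat.choose_succ_succ]
  push_cast; rfl

lemma shift_aux (i j N : ℕ) :
    ∑ k ∈ Finset.range (N + 1), (LL (i + 1) k * LL j k - LL i k * LL (j + 1) k)
      = LL i (N + 1) * LL j N - LL i N * LL j (N + 1) := by
  induction N with
  | zero => simp [LL_succ_zero]; ring
  | succ N ih => rw [Finset.sum_range_succ, ih, LL_succ_succ, LL_succ_succ]; ring

lemma sum_LL (j : ℕ) : ∀ i N : ℕ, i + j ≤ N →
    ∑ k ∈ Finset.range (N + 1), LL i k * LL j k = LL (i + j) 0 := by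
  induction j with
  | zero =>
    intro i N _
    rw [Finset.sum_range_succ', Finset.sum_eq_zero]
    · simp [LL]
    · intro k _
      rw [LL_zero_of_lt (Nat.succ_pos k), mul_zero]
  | succ j ih =>
    intro i N h
    have h1 := shift_aux i j N
    rw [LL_zero_of_lt (show i < N + 1 by omega), LL_zero_of_lt (show j < N + 1 by omega),
      Finset.sum_sub_distrib] at h1
    have h2 := ih (i + 1) N (by omega)
    rw [show i + (j + 1) = i + 1 + j by omega, ← h2]
    linarith

lemma sum_LL' (i j n : ℕ) (hj : j < n) :
    ∑ k ∈ Finset.range n, LL i k * LL j k = LL (i + j) 0 := by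
  rw [← sum_LL j i (n + i + j) (by omega)]
  apply Finset.sum_subset
  · intro k; simp; omega
  · intro k _ hk
    rw [LL_zero_of_lt (show j < k by simp at hk; omega), mul_zero]

/-- Path adjacency matrix with a loop at `0`. -/
def JJ (n : ℕ) : Matrix (Fin n) (Fin n) ℤ :=
  Matrix.of fun i j => if i.1 + 1 = j.1 ∨ j.1 + 1 = i.1 ∨ (i.1 = 0 ∧ j.1 = 0) then 1 else 0

/-- Path adjacency matrix with a loop at the last vertex. -/
def TT (n : ℕ) : Matrix (Fin n) (Fin n) ℤ :=
  Matrix.of fun i j =>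
    if i.1 + 1 = j.1 ∨ j.1 + 1 = i.1 ∨ (i.1 + 1 = n ∧ j.1 + 1 = n) then 1 else 0

lemma det_JJ_eq (n : ℕ) : (JJ n).det = (TT n).det := by
  rw [← Matrix.det_submatrix_equiv_self Fin.revPerm (TT n)]
  congr 1
  ext i j
  simp only [JJ, TT, Matrix.of_apply, Matrix.submatrix_apply, Fin.revPerm_apply, Fin.val_rev]
  have := i.2
  have := j.2
  congr 1
  apply propext
  omega

lemma det_TT_step (n : ℕ) : (TT (n + 2)).det = - (TT n).det := by
  rw [Matrix.det_succ_row_zero, Finset.sum_eq_single (1 : Fin (n + 2))]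
  · rw [Matrix.det_succ_column_zero, Finset.sum_eq_single (0 : Fin (n + 1))]
    · have : ((TT (n + 2)).submatrix Fin.succ (Fin.succAbove 1)).submatrix
          (Fin.succAbove 0) Fin.succ = TT n := by
        ext i j
        have hj : (Fin.succAbove (1 : Fin (n + 2)) j.succ) = j.succ.succ := by
          rw [← Fin.succ_zero_eq_one, Fin.succ_succAbove_succ]; simp
        simp only [TT, Matrix.of_apply, Matrix.submatrix_apply, hj, Fin.zero_succAbove,
          Fin.val_succ]
        congr 1
        apply propext
        omega
      rw [this]
      simp [TT]
    · intro b _ hb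
      have : b.1 ≠ 0 := fun h => hb (Fin.ext h)
      simp [TT, this]
    · simp
  · intro b _ hb
    have : b.1 ≠ 1 := fun h => hb (Fin.ext (by simpa using h))
    simp [TT, this.symm]
  · simp

lemma det_TT : ∀ n : ℕ, (TT n).det = (-1) ^ (n / 2)
  | 0 => by simp
  | 1 => by simp [TT]
  | n + 2 => by
    rw [det_TT_step, det_TT n, show (n + 2) / 2 = n / 2 + 1 by omega, pow_succ]; ring

/-- The lower triangular factor. -/
def LM (n : ℕ) : Matrix (Fin n) (Fin n) ℤ := Matrix.of fun i k => LL i.1 k.1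

lemma det_LM (n : ℕ) : (LM n).det = 1 := by
  rw [Matrix.det_of_lowerTriangular]
  · apply Finset.prod_eq_one
    intro i _
    simp only [LM, Matrix.of_apply, LL]
    rw [show (i.1 + i.1 + 1) / 2 = i.1 by omega]; simp
  · intro i j h
    exact LL_zero_of_lt (by simpa using h)

lemma LM_mul_JJ (n : ℕ) (i l : Fin n) : (LM n * JJ n) i l = LL (i.1 + 1) l.1 := by
  have hi := i.2
  have hl := l.2
  simp only [Matrix.mul_apply, LM, JJ, Matrix.of_apply]
  rw [Fin.sum_univ_eq_sum_range (fun k => LL i.1 k *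
    (if k + 1 = l.1 ∨ l.1 + 1 = k ∨ (k = 0 ∧ l.1 = 0) then 1 else 0)) n]
  have hext : ∀ f : ℕ → ℤ, ∑ k ∈ Finset.range n, LL i.1 k * f k
      = ∑ k ∈ Finset.range (n + 1), LL i.1 k * f k := by
    intro f
    rw [Finset.sum_range_succ, LL_zero_of_lt hi]; ring
  rw [hext]
  generalize l.1 = m at *
  rcases m with _ | m
  · rw [LL_succ_zero, ← Finset.sum_subset (s₁ := {0, 1})]
    · simp
    · intro k; simp; omega
    · intro k _ hk
      simp at hk
      rw [if_neg (by omega), mul_zero]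
  · rw [LL_succ_succ, ← Finset.sum_subset (s₁ := {m, m + 2})]
    · simp
    · intro k; simp; omega
    · intro k _ hk
      simp at hk
      rw [if_neg (by omega), mul_zero]

theorem central_binomial_hankel_det_shift (n : ℕ) (hn : 0 < n) :
    (Matrix.of fun i j : Fin n =>
      ((i.1 + j.1 + 1).choose ((i.1 + j.1 + 1) / 2) : ℤ)).det = (-1) ^ (n / 2) := by
  have h : (Matrix.of fun i j : Fin n =>
      ((i.1 + j.1 + 1).choose ((i.1 + j.1 + 1) / 2) : ℤ)) = LM n * JJ n * (LM n).transpose := by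
    ext i j
    rw [Matrix.mul_apply]
    simp only [LM_mul_JJ, Matrix.transpose_apply, Matrix.of_apply]
    simp only [LM, Matrix.of_apply]
    rw [Fin.sum_univ_eq_sum_range (fun k => LL (i.1 + 1) k * LL j.1 k) n, sum_LL' _ _ _ j.2,
      show i.1 + 1 + j.1 = i.1 + j.1 + 1 by omega, LL_zero_eq]
  rw [h, Matrix.det_mul, Matrix.det_mul, Matrix.det_transpose, det_LM, det_JJ_eq, det_TT]
  ring
end

section
/- For all positive integers n and non-negative integers k, the determinant of the n×n matrix whose (i,j) entry is the sum over l from 0 to k of binomial(i+j, floor((i+j+1-k)/2) + l) equals (-1)^{n_1 * binomial(k+1,2)} if n = (k+1)n_1 or n = (k+1)n_1 + 1 for some non-negative integer n_1, and equals 0 if n is not congruent to 0 or 1 modulo k+1. -/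
/- Integer binomial coefficient: `chz a b = binomial(a,b)`, equal to `0` unless
`0 ≤ b ≤ a`. -/
def chz (a b : ℤ) : ℤ := if 0 ≤ b ∧ b ≤ a then (a.toNat.choose b.toNat : ℤ) else 0

open Polynomial in
/-- monic of exact degree `n` -/
def HSB.MD (p : ℤ[X]) (n : ℕ) : Prop := p.Monic ∧ p.degree = n

namespace HSB
open Polynomial

local notation "CS" => Polynomial.Chebyshev.S ℤ
local notation "CC" => Polynomial.Chebyshev.C ℤ

lemma MD.mul {p q : ℤ[X]} {m n : ℕ} (hp : MD p m) (hq : MD q n) : MD (p * q) (m + n) :=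
  ⟨hp.1.mul hq.1, by rw [degree_mul, hp.2, hq.2]; norm_cast⟩

lemma MD.sub {p q : ℤ[X]} {n : ℕ} (hp : MD p n) (hq : q.degree < n) : MD (p - q) n :=
  ⟨hp.1.sub_of_left (by rw [hp.2]; exact hq), by
    rw [degree_sub_eq_left_of_degree_lt (by rw [hp.2]; exact hq), hp.2]⟩

lemma MD.natDegree {p : ℤ[X]} {n : ℕ} (hp : MD p n) : p.natDegree = n :=
  natDegree_eq_of_degree_eq_some hp.2

lemma MD_X : MD X 1 := ⟨monic_X, by simp⟩

lemma MD_S (n : ℕ) : MD (CS (n : ℤ)) n ∧ MD (CS ((n : ℤ) + 1)) (n + 1) := by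
  induction n with
  | zero =>
    refine ⟨⟨by simp, by simp⟩, ?_⟩
    simpa using MD_X
  | succ n ih =>
    refine ⟨by exact_mod_cast ih.2, ?_⟩
    have e : ((n + 1 : ℕ) : ℤ) + 1 = (n : ℤ) + 2 := by push_cast; ring
    rw [e, Chebyshev.S_add_two]
    have := (MD_X.mul ih.2)
    rw [show 1 + (n + 1) = n + 1 + 1 by ring] at this
    refine this.sub ?_
    rw [ih.1.2]; exact_mod_cast (by omega)

lemma MD_C (n : ℕ) : (MD (CC ((n : ℤ) + 1)) (n + 1)) ∧ MD (CC ((n : ℤ) + 2)) (n + 2) := by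
  induction n with
  | zero =>
    refine ⟨by simpa using MD_X, ?_⟩
    have h := MD_X.mul MD_X
    have h2 : MD (X * X - 2 : ℤ[X]) 2 := by
      refine h.sub ?_
      refine lt_of_le_of_lt (degree_C_le (a := (2 : ℤ))) ?_
      norm_num
    simpa [Chebyshev.C_two, pow_two] using h2
  | succ n ih =>
    have e : ((n + 1 : ℕ) : ℤ) + 2 = ((n : ℤ) + 1) + 2 := by push_cast; ring
    have e1 : ((n + 1 : ℕ) : ℤ) + 1 = (n : ℤ) + 2 := by push_cast; ring
    refine ⟨by rw [e1]; exact ih.2, ?_⟩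
    rw [e, Chebyshev.C_add_two, show (n : ℤ) + 1 + 1 = n + 2 by ring]
    have := (MD_X.mul ih.2)
    rw [show 1 + (n + 2) = n + 1 + 2 by ring] at this
    refine this.sub ?_
    rw [ih.1.2]; exact_mod_cast (by omega)

lemma MD_Csub (r : ℕ) (hr : 0 < r) : MD (CC (r : ℤ) - CC ((r : ℤ) - 1)) r := by
  obtain ⟨t, rfl⟩ : ∃ t, r = t + 1 := ⟨r - 1, by omega⟩
  have h := (MD_C t).1
  push_cast
  refine h.sub ?_
  rw [add_sub_cancel_right]
  rcases t with _ | t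
  · simp only [Nat.cast_zero, Chebyshev.C_zero]
    exact lt_of_le_of_lt (degree_C_le (a := (2 : ℤ))) (by norm_num)
  · push_cast
    rw [(MD_C t).1.2]; exact_mod_cast (by omega)

lemma C_mul_S (r : ℕ) : ∀ n : ℤ, (CC (r : ℤ) * CS n = CS (n + r) + CS (n - r)) ∧
    (CC ((r : ℤ) + 1) * CS n = CS (n + r + 1) + CS (n - r - 1)) := by
  induction r with
  | zero =>
    intro n
    refine ⟨by simp; ring, ?_⟩
    simp only [Nat.cast_zero, zero_add, Chebyshev.C_one, add_zero, sub_zero]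
    rw [Chebyshev.S_add_one]; ring
  | succ r ih =>
    intro n
    refine ⟨by have := (ih n).2; push_cast; rw [this]; congr 2 <;> ring, ?_⟩
    have e : ((r + 1 : ℕ) : ℤ) + 1 = (r : ℤ) + 2 := by push_cast; ring
    rw [e, Chebyshev.C_add_two, sub_mul, mul_assoc, (ih n).2, (ih n).1]
    have h1 := Chebyshev.S_add_two ℤ (n + r)
    have h2 := Chebyshev.S_sub_two ℤ (n - r)
    push_cast
    rw [show n + (r + 1 : ℤ) + 1 = n + r + 2 by ring, show n - (r + 1 : ℤ) - 1 = n - r - 2 by ring,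
      h1, h2]
    ring

/-- `S_m(z^N)` as a polynomial. -/
noncomputable def P (N : ℕ) (m : ℤ) : ℤ[X] := (CS m).comp (CC (N : ℤ))

lemma P_mul (k : ℕ) (m : ℕ) :
    CS (k : ℤ) * P (k + 1) ((m : ℤ) - 1) = CS (((k + 1) * m : ℕ) - 1 : ℤ) ∧
    CS (k : ℤ) * P (k + 1) (m : ℤ) = CS (((k + 1) * (m + 1) : ℕ) - 1 : ℤ) := by
  induction m with
  | zero => constructor <;> simp [P]
  | succ m ih =>
    refine ⟨by have := ih.2; push_cast at this ⊢; simpa using this, ?_⟩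
    have h : P (k + 1) ((m + 1 : ℕ) : ℤ) =
        CC ((k + 1 : ℕ) : ℤ) * P (k + 1) m - P (k + 1) ((m : ℤ) - 1) := by
      simp only [P]
      push_cast
      rw [Chebyshev.S_add_one]
      simp
    rw [h, mul_sub, ih.1, mul_left_comm, ih.2, (C_mul_S (k + 1) _).1]
    push_cast
    rw [show ((k : ℤ) + 1) * (m + 1) - 1 - (k + 1) = (k + 1) * m - 1 by ring,
      show ((k : ℤ) + 1) * (m + 1 + 1) - 1  = (k + 1) * (m + 1) - 1 + (k + 1) by ring]
    ring

lemma MD_P (k m : ℕ) : MD (P (k + 1) m) ((k + 1) * m) := by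
  have hC := (MD_C k).1
  have hS := (MD_S m).1
  have hm : (P (k + 1) m).Monic := by
    unfold P
    refine hS.1.comp ?_ ?_
    · push_cast; exact hC.1
    · push_cast; rw [hC.natDegree]; omega
  refine ⟨hm, ?_⟩
  rw [degree_eq_natDegree hm.ne_zero]
  unfold P
  push_cast
  rw [natDegree_comp, hC.natDegree, hS.natDegree, mul_comm]
  push_cast; rfl

/-- row polynomials -/
noncomputable def F (k i : ℕ) : ℤ[X] :=
  if i % (k + 1) = 0 then P (k + 1) (i / (k + 1) : ℕ) - P (k + 1) (((i / (k + 1) : ℕ) : ℤ) - 1)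
  else P (k + 1) (i / (k + 1) : ℕ) *
    (CC ((i % (k + 1) : ℕ) : ℤ) - CC (((i % (k + 1) : ℕ) : ℤ) - 1))

/-- column polynomials -/
noncomputable def V (j : ℕ) : ℤ[X] := CS (j : ℤ) - CS ((j : ℤ) - 1)

lemma MD_V (j : ℕ) : MD (V j) j := by
  refine (MD_S j).1.sub ?_
  rcases j with _ | j
  · simp
  · push_cast
    rw [add_sub_cancel_right, (MD_S j).1.2]; exact_mod_cast (by omega)

lemma MD_F (k i : ℕ) : MD (F k i) i := by
  unfold F
  have hd := Nat.div_add_mod i (k + 1)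
  have hP := MD_P k (i / (k + 1))
  split_ifs with h
  · rw [h, add_zero] at hd
    rw [hd] at hP
    refine hP.sub ?_
    rcases hq : i / (k + 1) with _ | m
    · simp [P]
    · push_cast
      rw [add_sub_cancel_right, (MD_P k m).2, ← hd, hq]
      have : (k + 1) * m < (k + 1) * (m + 1) := by nlinarith
      exact_mod_cast this
  · have := hP.mul (MD_Csub (i % (k + 1)) (by omega))
    rwa [hd] at this

/-- the operator of multiplication by `X` -/
def T : Module.End ℤ (ℤ → ℤ) where
  toFun u := fun q => u (q + 1) + u (q - 1)
  map_add' u v := by ext q; simp; ring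
  map_smul' c u := by ext q; simp; ring

lemma T_apply (u : ℤ → ℤ) (q : ℤ) : T u q = u (q + 1) + u (q - 1) := rfl

def AS (u : ℤ → ℤ) : Prop := ∀ q, u (-2 - q) = - u q

lemma AS.T {u : ℤ → ℤ} (h : AS u) : AS (T u) := by
  intro q
  rw [T_apply, T_apply, show -2 - q + 1 = -2 - (q - 1) by ring,
    show -2 - q - 1 = -2 - (q + 1) by ring, h, h]
  ring

lemma aeval_S (m : ℕ) : ∀ u, AS u → (aeval T (CS ((m : ℤ) - 1)) u 0 = u ((m : ℤ) - 1) ∧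
    aeval T (CS (m : ℤ)) u 0 = u m) := by
  induction m with
  | zero =>
    intro u hu
    have := hu (-1)
    norm_num at this
    constructor
    · simp; omega
    · simp
  | succ m ih =>
    intro u hu
    refine ⟨by have := (ih u hu).2; push_cast; simpa using this, ?_⟩
    push_cast
    rw [Chebyshev.S_add_one, mul_comm, map_sub, map_mul, aeval_X, LinearMap.sub_apply,
      Module.End.mul_apply, Pi.sub_apply, (ih _ hu.T).2, (ih u hu).1, T_apply]
    ring

def s : ℤ → ℤ := fun q => (if 0 ≤ q then 1 else 0) - (if q ≤ -2 then 1 else 0)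

lemma aeval_V (j : ℕ) :
    (aeval T (V j) s = fun q => (if (j : ℤ) ≤ q then 1 else 0) - (if q ≤ -2 - j then 1 else 0)) ∧
    (aeval T (V (j + 1)) s =
      fun q => (if (j : ℤ) + 1 ≤ q then 1 else 0) - (if q ≤ -2 - j - 1 then 1 else 0)) := by
  induction j with
  | zero =>
    constructor
    · simp [V, s]; rfl
    · ext q
      simp [V, T_apply, s]
      split_ifs <;> omega
  | succ j ih =>
    have e : V (j + 1 + 1) = X * V (j + 1) - V j := by
      simp only [V]
      push_cast
      have h1 := Chebyshev.S_add_one ℤ ((j : ℤ) + 1)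
      have h2 := Chebyshev.S_add_one ℤ (j : ℤ)
      rw [add_sub_cancel_right] at h1
      rw [add_sub_cancel_right, add_sub_cancel_right, h1]
      linear_combination -h2
    refine ⟨by rw [ih.2]; ext q; push_cast; congr 2; congr 1; ring_nf, ?_⟩
    rw [e, map_sub, map_mul, aeval_X, LinearMap.sub_apply, Module.End.mul_apply, ih.1, ih.2]
    ext q
    simp only [Pi.sub_apply, T_apply]
    push_cast
    split_ifs <;> omega

/-- the base functional -/
noncomputable def Lam : ℤ[X] →ₗ[ℤ] ℤ :=
  (LinearMap.proj 0).comp ((LinearMap.applyₗ s).comp (aeval T).toLinearMap)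

lemma Lam_apply (f : ℤ[X]) : Lam f = aeval T f s 0 := rfl

lemma Lam_S_V (n j : ℕ) : Lam (CS ((n : ℤ) - 1) * V j) = if j < n then 1 else 0 := by
  rw [Lam_apply, map_mul, Module.End.mul_apply, (aeval_S n _ _).1, (aeval_V j).1]
  · simp only
    split_ifs <;> omega
  · rw [(aeval_V j).1]
    intro q
    simp only
    split_ifs <;> omega

/-- the explicit matrix -/
def E (k i j : ℕ) : ℤ :=
  if i % (k + 1) = 0 then
    (if j < (k + 1) * (i / (k + 1) + 1) then 1 else 0) - (if j < (k + 1) * (i / (k + 1)) then 1 else 0)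
  else (if j + 1 = (k + 1) * (i / (k + 1) + 1) + i % (k + 1) then 1 else 0) -
    (if j + i % (k + 1) = (k + 1) * (i / (k + 1) + 1) then 1 else 0)

lemma Lam_F_V (k i j : ℕ) : Lam (CS (k : ℤ) * (F k i * V j)) = E k i j := by
  unfold F E
  have hr : i % (k + 1) < k + 1 := Nat.mod_lt _ (by omega)
  generalize i / (k + 1) = m
  generalize i % (k + 1) = r at *
  by_cases h : r = 0
  · rw [if_pos h, if_pos h]
    rw [← mul_assoc, mul_sub, (P_mul k m).1, (P_mul k m).2, sub_mul, map_sub, Lam_S_V, Lam_S_V]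
  · rw [if_neg h, if_neg h]
    obtain ⟨t, rfl⟩ : ∃ t, r = t + 1 := ⟨r - 1, by omega⟩
    rw [← mul_assoc, ← mul_assoc, (P_mul k m).2, mul_comm (CS _), sub_mul]
    push_cast
    rw [add_sub_cancel_right, (C_mul_S t _).1, (C_mul_S t _).2]
    obtain ⟨w, hw⟩ : ∃ w, (k + 1) * (m + 1) = w + t + 1 := by
      refine ⟨(k + 1) * (m + 1) - t - 1, ?_⟩
      have : k + 1 ≤ (k + 1) * (m + 1) := by nlinarith
      omega
    have hw' : ((k : ℤ) + 1) * (m + 1) = w + t + 1 := by exact_mod_cast hw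
    rw [hw, hw']
    have a1 := Lam_S_V (w + t + 1 + (t + 1)) j
    have a2 := Lam_S_V w j
    have a3 := Lam_S_V (w + t + 1 + t) j
    have a4 := Lam_S_V (w + 1) j
    push_cast at a1 a2 a3 a4
    rw [sub_mul, add_mul, add_mul, map_sub, map_add, map_add,
      show (w : ℤ) + t + 1 - 1 + t + 1 = w + t + 1 + (t + 1) - 1 by ring,
      show (w : ℤ) + t + 1 - 1 - t - 1 = w - 1 by ring,
      show (w : ℤ) + t + 1 - 1 + t = w + t + 1 + t - 1 by ring,
      show (w : ℤ) + t + 1 - 1 - t = w + 1 - 1 by ring, a1, a2, a3, a4]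
    split_ifs <;> omega

/-- the moments -/
def mom (m k : ℕ) : ℤ :=
  ∑ l ∈ Finset.range (k + 1), chz (m : ℤ) (Int.fdiv ((m : ℤ) + 1 - k) 2 + l)

lemma chz_succ (m : ℕ) (b : ℤ) : chz ((m : ℤ) + 1) b = chz m b + chz m (b - 1) := by
  rcases lt_trichotomy b 0 with h | rfl | h
  · simp only [chz]
    rw [if_neg (by omega), if_neg (by omega), if_neg (by omega)]; rfl
  · simp [chz]; omega
  · obtain ⟨c, rfl⟩ : ∃ c : ℕ, b = c + 1 := ⟨(b - 1).toNat, by omega⟩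
    have key : ∀ a c : ℕ, chz (a : ℤ) (c : ℤ) = (a.choose c : ℤ) := by
      intro a c
      simp only [chz]
      split_ifs with h
      · simp
      · rw [Nat.choose_eq_zero_of_lt (by omega)]; rfl
    have h1 := key (m + 1) (c + 1)
    have h2 := key m (c + 1)
    have h3 := key m c
    push_cast at h1 h2
    rw [add_sub_cancel_right, h1, h2, h3, Nat.choose_succ_succ]
    push_cast; ring

lemma T_pow_AS (m : ℕ) : AS ((T ^ m) s) := by
  induction m with
  | zero =>
    intro q
    simp only [pow_zero, Module.End.one_apply, s]
    split_ifs <;> omega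
  | succ m ih => rw [pow_succ']; exact ih.T

lemma mom_eq (m : ℕ) : ∀ k : ℕ, mom m k = (T ^ m) s k := by
  induction m with
  | zero =>
    intro k
    simp only [pow_zero, Module.End.one_apply, s, mom]
    rw [if_pos (by omega), if_neg (by omega)]
    rw [Finset.sum_eq_single (k / 2)]
    · rw [Int.fdiv_eq_ediv_of_nonneg _ (show (0 : ℤ) ≤ 2 by norm_num)]
      rw [show ((0 : ℕ) + 1 - k : ℤ) / 2 + (k / 2 : ℕ) = 0 by omega]
      simp [chz]
    · intro l _ hl
      rw [Int.fdiv_eq_ediv_of_nonneg _ (show (0 : ℤ) ≤ 2 by norm_num)]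
      simp only [chz]
      rw [if_neg]
      omega
    · intro h; simp at h; omega
  | succ m ih =>
    have step : ∀ (b : ℤ) (k : ℕ), ∑ l ∈ Finset.range (k + 1), chz ((m : ℤ) + 1) (b + l) =
        ∑ l ∈ Finset.range (k + 2), chz (m : ℤ) (b - 1 + l) +
        ∑ l ∈ Finset.range k, chz (m : ℤ) (b + l) := by
      intro b k
      rw [Finset.sum_congr rfl (fun (l : ℕ) _ => chz_succ m (b + l)), Finset.sum_add_distrib,
        Finset.sum_range_succ (fun l : ℕ => chz (m : ℤ) (b + l)),
        Finset.sum_range_succ (fun l : ℕ => chz (m : ℤ) (b - 1 + l))]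
      simp only [show ∀ l : ℕ, b + (l : ℤ) - 1 = b - 1 + l from fun l => by ring]
      push_cast
      rw [show b - 1 + ((k : ℤ) + 1) = b + k by ring]
      ring
    intro k
    rw [pow_succ', Module.End.mul_apply, T_apply]
    have h1 := ih (k + 1)
    push_cast at h1
    rw [← h1]
    simp only [mom]
    push_cast
    rw [step, show (m : ℤ) + 1 - (k + 1) = m + 1 + 1 - k - 2 by ring]
    simp only [Int.fdiv_eq_ediv_of_nonneg _ (show (0 : ℤ) ≤ 2 by norm_num)]
    rw [show ((m : ℤ) + 1 + 1 - k - 2) / 2 = ((m : ℤ) + 1 + 1 - k) / 2 - 1 by omega]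
    congr 1
    rcases k with _ | k
    · have := T_pow_AS m (-1)
      norm_num at this
      simp
      omega
    · have h2 := ih k
      push_cast
      rw [add_sub_cancel_right, ← h2, mom]
      refine Finset.sum_congr rfl fun l _ => ?_
      rw [Int.fdiv_eq_ediv_of_nonneg _ (show (0 : ℤ) ≤ 2 by norm_num)]
      congr 2
      ring_nf

lemma Lam_X_pow (k m : ℕ) : Lam (CS (k : ℤ) * X ^ m) = mom m k := by
  rw [Lam_apply, map_mul, Module.End.mul_apply, map_pow, aeval_X,
    (aeval_S k _ (T_pow_AS m)).2, mom_eq]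

open Matrix

lemma det_eq (n k : ℕ) : (Matrix.of fun i j : Fin n => mom (i.1 + j.1) k).det =
    (Matrix.of fun i j : Fin n => E k i.1 j.1).det := by
  have hA := Matrix.det_matrixOfPolynomials (fun i : Fin n => F k i.1)
    (fun i => (MD_F k i).natDegree) (fun i => (MD_F k i).1)
  have hB := Matrix.det_matrixOfPolynomials (fun i : Fin n => V i.1)
    (fun i => (MD_V i).natDegree) (fun i => (MD_V i).1)
  have hM : (Matrix.of fun i j : Fin n => E k i.1 j.1) =
      (Matrix.of fun i j : Fin n => (F k j.1).coeff i)ᵀ *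
      (Matrix.of fun i j : Fin n => mom (i.1 + j.1) k) *
      (Matrix.of fun i j : Fin n => (V j.1).coeff i) := by
    ext i j
    have e1 : F k i = ∑ a : Fin n, C ((F k i).coeff a) * X ^ (a : ℕ) := by
      conv_lhs => rw [as_sum_range_C_mul_X_pow' (F k i) (n := n) (by
        rw [(MD_F k i).natDegree]; exact i.2)]
      rw [Finset.sum_range]
    have e2 : V j = ∑ a : Fin n, C ((V j).coeff a) * X ^ (a : ℕ) := by
      conv_lhs => rw [as_sum_range_C_mul_X_pow' (V j) (n := n) (by
        rw [(MD_V j).natDegree]; exact j.2)]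
      rw [Finset.sum_range]
    rw [Matrix.of_apply, ← Lam_F_V, e1, e2, Finset.sum_mul_sum, Finset.mul_sum, map_sum,
      Matrix.mul_apply]
    simp only [Matrix.mul_apply, Matrix.of_apply, Matrix.transpose_apply, Finset.mul_sum, map_sum,
      Finset.sum_mul]
    rw [Finset.sum_comm]
    refine Finset.sum_congr rfl fun b _ => Finset.sum_congr rfl fun a _ => ?_
    rw [show CS (k : ℤ) * (C ((F k i).coeff a) * X ^ (a : ℕ) * (C ((V j).coeff b) * X ^ (b : ℕ))) =
      ((F k i).coeff a * (V j).coeff b) • (CS (k : ℤ) * X ^ ((a : ℕ) + b)) by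
        rw [smul_eq_C_mul, C_mul]; ring, map_smul, Lam_X_pow, smul_eq_mul]
    ring
  rw [hM, Matrix.det_mul, Matrix.det_mul, Matrix.det_transpose, hA, hB]
  ring

lemma E_block (k m a j : ℕ) (ha : a < k + 1) : E k ((k + 1) * m + a) j =
    if a = 0 then
      (if j < (k + 1) * (m + 1) then 1 else 0) - (if j < (k + 1) * m then 1 else 0)
    else (if j + 1 = (k + 1) * (m + 1) + a then 1 else 0) -
      (if j + a = (k + 1) * (m + 1) then 1 else 0) := by
  have h1 : ((k + 1) * m + a) % (k + 1) = a := by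
    rw [Nat.mul_add_mod, Nat.mod_eq_of_lt ha]
  have h2 : ((k + 1) * m + a) / (k + 1) = m := by
    rw [Nat.mul_add_div (by omega), Nat.div_eq_of_lt ha, add_zero]
  rw [E, h1, h2]

lemma E_det_add (k m t : ℕ) (ht : t ≤ k + 1) :
    (Matrix.of fun i j : Fin ((k + 1) * m + t) => E k i.1 j.1).det =
    (Matrix.of fun i j : Fin ((k + 1) * m) => E k i.1 j.1).det *
    (Matrix.of fun i j : Fin t => E k ((k + 1) * m + i.1) ((k + 1) * m + j.1)).det := by
  rw [← Matrix.det_submatrix_equiv_self finSumFinEquiv, ← Matrix.det_fromBlocks_zero₂₁ _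
    (Matrix.of fun (i : Fin ((k + 1) * m)) (j : Fin t) => E k i.1 ((k + 1) * m + j.1))]
  congr 1
  ext i j
  rcases i with i | i <;> rcases j with j | j <;> simp
  have hj := j.2
  have hi := i.2
  rw [E_block _ _ _ _ (by omega), mul_add]
  split_ifs <;> omega

lemma anti_det (k : ℕ) : (Matrix.of fun i j : Fin k => if i.1 + j.1 + 1 = k then (-1 : ℤ) else 0).det
    = (-1) ^ (Nat.choose (k + 1) 2) := by
  induction k with
  | zero => simp
  | succ k ih =>
    rw [Matrix.det_succ_row_zero, Finset.sum_eq_single (Fin.last k)]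
    · have : ((Matrix.of fun i j : Fin (k + 1) =>
          if i.1 + j.1 + 1 = k + 1 then (-1 : ℤ) else 0).submatrix Fin.succ (Fin.last k).succAbove) =
          (Matrix.of fun i j : Fin k => if i.1 + j.1 + 1 = k then (-1 : ℤ) else 0) := by
        ext i j
        simp only [Matrix.submatrix_apply, Matrix.of_apply, Fin.succAbove_last, Fin.val_succ,
          Fin.val_castSucc]
        congr 1
        simp; omega
      rw [this, ih, Nat.choose_succ_succ (k + 1) 1]
      simp [pow_add]
    · intro j _ hj
      have : j.1 ≠ k := fun h => hj (Fin.ext h)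
      simp [this]
    · simp

lemma D_det (k m : ℕ) :
    (Matrix.of fun i j : Fin (k + 1) => E k ((k + 1) * m + i.1) ((k + 1) * m + j.1)).det =
    (-1) ^ (Nat.choose (k + 1) 2) := by
  rw [Matrix.det_succ_column_zero, Finset.sum_eq_single 0]
  · rw [← anti_det, Matrix.of_apply, E_block _ _ _ _ (by simp)]
    have : ((Matrix.of fun i j : Fin (k + 1) => E k ((k + 1) * m + i.1) ((k + 1) * m + j.1)).submatrix
        (Fin.succAbove 0) Fin.succ) =
        (Matrix.of fun i j : Fin k => if i.1 + j.1 + 1 = k then (-1 : ℤ) else 0) := by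
      ext i j
      have hi := i.2
      have hj := j.2
      simp only [Matrix.submatrix_apply, Matrix.of_apply, Fin.succAbove_zero, Fin.val_succ]
      rw [E_block _ _ _ _ (by omega), mul_add, if_neg (by omega), if_neg (by omega)]
      split_ifs <;> omega
    rw [this]
    simp [mul_add]
  · intro i _ hi
    have h0 : i.1 ≠ 0 := fun h => hi (Fin.ext h)
    have hi := i.2
    rw [Matrix.of_apply, E_block _ _ _ _ hi, mul_add]
    rw [if_neg h0, if_neg (by simp; omega), if_neg (by simp; omega)]
    simp
  · simp

lemma E_det (k m : ℕ) : (Matrix.of fun i j : Fin ((k + 1) * m) => E k i.1 j.1).det =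
    (-1) ^ (m * Nat.choose (k + 1) 2) := by
  induction m with
  | zero => simp
  | succ m ih =>
    have := E_det_add k m (k + 1) le_rfl
    rw [ih, D_det, ← pow_add] at this
    rw [add_mul m, one_mul, ← this]
    rfl

lemma mat_eq (n k : ℕ) : (Matrix.of fun i j : Fin n =>
        ∑ l ∈ Finset.range (k + 1),
          chz ((i.1 : ℤ) + j.1) (Int.fdiv ((i.1 : ℤ) + j.1 + 1 - k) 2 + l)) =
    (Matrix.of fun i j : Fin n => mom (i.1 + j.1) k) := by
  ext i j
  simp [mom]

end HSB

theorem hankel_det_sum_binomial (n k : ℕ) (hn : 0 < n) :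
    (∀ n₁ : ℕ, n = (k + 1) * n₁ ∨ n = (k + 1) * n₁ + 1 →
      (Matrix.of fun i j : Fin n =>
        ∑ l ∈ Finset.range (k + 1),
          chz ((i.1 : ℤ) + j.1) (Int.fdiv ((i.1 : ℤ) + j.1 + 1 - k) 2 + l)).det =
        (-1) ^ (n₁ * Nat.choose (k + 1) 2)) ∧
    (n % (k + 1) ≠ 0 ∧ n % (k + 1) ≠ 1 →
      (Matrix.of fun i j : Fin n =>
        ∑ l ∈ Finset.range (k + 1),
          chz ((i.1 : ℤ) + j.1) (Int.fdiv ((i.1 : ℤ) + j.1 + 1 - k) 2 + l)).det = 0) := by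
  rw [HSB.mat_eq, HSB.det_eq]
  constructor
  · rintro n₁ (rfl | rfl)
    · exact HSB.E_det k n₁
    · rw [HSB.E_det_add k n₁ 1 (by omega), HSB.E_det]
      have := HSB.E_block k n₁ 0 ((k + 1) * n₁) (by omega)
      rw [if_pos rfl, if_pos (by rw [mul_add]; omega), if_neg (by omega)] at this
      simp only [add_zero] at this
      simp [this]
  · rintro ⟨h0, h1⟩
    have hd := Nat.div_add_mod n (k + 1)
    have hlt := Nat.mod_lt n (show 0 < k + 1 by omega)
    refine Matrix.det_eq_zero_of_row_eq_zero ⟨(k + 1) * (n / (k + 1)) + 1, by omega⟩ ?_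
    intro j
    have hj := j.2
    rw [Matrix.of_apply]
    dsimp only
    rw [HSB.E_block _ _ _ _ (by omega), mul_add, if_neg (by omega), if_neg (by omega),
      if_neg (by omega), sub_zero]
end

section
/- For all positive integers n and non-negative integers k, the determinant of the n×n matrix whose (i,j) entry is the sum over l from -k to k+1 of binomial(2i+2j, i+j+l) equals (-1)^{n_1 * binomial(k+1,2)} if n = (k+1)n_1 or n = (k+1)n_1 + 1 for some non-negative integer n_1, and equals 0 otherwise. -/
namespace HK
open Polynomial LaurentPolynomial

noncomputable section

/-- the constant term functional -/
def ct : ℤ[T;T⁻¹] →ₗ[ℤ] ℤ where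
  toFun f := f.coeff 0
  map_add' f g := by simp
  map_smul' c f := by
    rw [AddMonoidAlgebra.coeff_smul, Finsupp.smul_apply]; rfl

lemma ct_T (n : ℤ) : ct (T n) = if n = 0 then 1 else 0 := by
  change (T n : ℤ[T;T⁻¹]).coeff 0 = _
  simp

lemma ct_invert (f : ℤ[T;T⁻¹]) : ct (invert f) = ct f := by
  change (invert f).coeff 0 = f.coeff 0
  simp

/-- substitution `x = z + 2 + 1/z` -/
def phi : ℤ[X] →ₐ[ℤ] ℤ[T;T⁻¹] := aeval (T 1 + 2 + T (-1))

lemma phi_X : phi X = T 1 + 2 + T (-1) := by simp [phi]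

lemma invert_phi (p : ℤ[X]) : invert (phi p) = phi p := by
  have : (invert (R := ℤ)).toAlgHom.comp phi = phi := by
    apply Polynomial.algHom_ext
    have h2 : invert (2 : ℤ[T;T⁻¹]) = 2 := map_ofNat _ 2
    simp [phi_X, h2]
    ring
  exact congrArg (fun f => f p) this

/-- the geometric sum -/
def E (N : ℕ) : ℤ[T;T⁻¹] := ∑ l ∈ Finset.Ico (-(N : ℤ)) N, T l

lemma E_succ (N : ℕ) : E (N + 1) = T (-(N : ℤ) - 1) + E N + T N := by
  unfold E
  have h : Finset.Ico (-((N + 1 : ℕ) : ℤ)) ((N + 1 : ℕ) : ℤ)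
      = insert (-(N : ℤ) - 1) (insert (N : ℤ) (Finset.Ico (-(N : ℤ)) N)) := by
    ext x; simp only [Finset.mem_Ico, Finset.mem_insert]; push_cast; omega
  rw [h, Finset.sum_insert, Finset.sum_insert]
  · ring
  · simp
  · simp only [Finset.mem_Ico, Finset.mem_insert]; omega

lemma E_mul (N : ℕ) : E N * (T 1 - 1) = T N - T (-(N : ℤ)) := by
  induction N with
  | zero => simp [E]
  | succ n ih =>
    rw [E_succ, add_mul, add_mul, ih]
    push_cast
    simp only [mul_sub, ← T_add, mul_one]
    have h1 : -(n : ℤ) - 1 + 1 = -n := by ring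
    have h2 : -((n : ℤ) + 1) = -n - 1 := by ring
    rw [h1, h2]; ring

lemma invert_E (N : ℕ) : invert (E N) = T 1 * E N := by
  induction N with
  | zero => simp [E]
  | succ n ih =>
    rw [E_succ, map_add, map_add, ih]
    simp only [mul_add, ← T_add, invert_T]
    have h1 : -(-(n : ℤ) - 1) = 1 + n := by ring
    have h2 : 1 + (-(n : ℤ) - 1) = - n := by ring
    rw [h1, h2]; ring

/-- the moment functional -/
def L (K : ℕ) : ℤ[X] →ₗ[ℤ] ℤ :=
  ct ∘ₗ (LinearMap.mulRight ℤ (E K)) ∘ₗ phi.toLinearMap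

lemma L_apply (K : ℕ) (p : ℤ[X]) : L K p = ct (phi p * E K) := rfl

lemma two_L (K : ℕ) (p : ℤ[X]) : 2 * L K p = ct (phi p * (1 + T 1) * E K) := by
  have h : L K p = ct (phi p * (T 1 * E K)) := by
    rw [L_apply, ← ct_invert, map_mul, invert_phi, invert_E]
  have : phi p * (1 + T 1) * E K = phi p * E K + phi p * (T 1 * E K) := by ring
  rw [this, map_add, ← h, ← L_apply]; ring

lemma phi_X_pow (m : ℕ) : phi (X ^ m) =
    ∑ r ∈ Finset.range (2 * m + 1), ((2 * m).choose r : ℤ) • (T ((r : ℤ) - m) : ℤ[T;T⁻¹]) := by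
  have h : (T 1 + 2 + T (-1) : ℤ[T;T⁻¹]) = (T 1 + 1) ^ 2 * T (-1) := by
    have h1 : (T 1 * T (-1) : ℤ[T;T⁻¹]) = 1 := by rw [← T_add]; simp
    linear_combination (-(T 1 : ℤ[T;T⁻¹]) - 2) * h1
  rw [map_pow, phi_X, h, mul_pow, ← pow_mul, add_pow, Finset.sum_mul]
  apply Finset.sum_congr rfl
  intro r _
  simp only [one_pow, mul_one, T_pow]
  rw [sub_eq_add_neg, T_add, zsmul_eq_mul]
  push_cast
  rw [mul_neg_one]
  ring

lemma L_X_pow (k m : ℕ) : L (k + 1) (X ^ m) =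
    ∑ l ∈ Finset.Icc (-(k : ℤ)) ((k : ℤ) + 1), chz (2 * (m : ℤ)) (m + l) := by
  rw [L_apply, phi_X_pow, E, Finset.mul_sum, map_sum]
  refine Finset.sum_bij' (fun l _ => -l) (fun l _ => -l) ?_ ?_ ?_ ?_ ?_
  · intro l hl; simp only [Finset.mem_Ico, Finset.mem_Icc] at *; push_cast at *; omega
  · intro l hl; simp only [Finset.mem_Ico, Finset.mem_Icc] at *; push_cast at *; omega
  · simp
  · simp
  · intro l hl
    rw [Finset.sum_mul, map_sum]
    simp only [smul_mul_assoc, ← T_add, map_smul, ct_T]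
    unfold chz
    split_ifs with h
    · rw [Finset.sum_eq_single (((m : ℤ) + -l).toNat)]
      · rw [if_pos (by omega)]
        simp
        congr 1
      · intro b _ hb
        rw [if_neg (by omega)]; simp
      · intro hb; simp at hb; omega
    · apply Finset.sum_eq_zero
      intro r hr
      simp at hr
      rw [if_neg (by omega)]; simp

/-- change of basis -/
lemma det_change (n : ℕ) (F : ℤ[X] →ₗ[ℤ] ℤ) (f q : ℕ → ℤ[X])
    (hf : ∀ i, (f i).Monic) (hf' : ∀ i, (f i).natDegree = i)
    (hq : ∀ i, (q i).Monic) (hq' : ∀ i, (q i).natDegree = i) :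
    (Matrix.of fun i j : Fin n => F (X ^ (i.1 + j.1))).det =
      (Matrix.of fun i j : Fin n => F (f i * q j)).det := by
  have h : (Matrix.of fun i j : Fin n => F (f i * q j)) =
      (Matrix.of fun i j : Fin n => (f j).coeff i).transpose *
      (Matrix.of fun i j : Fin n => F (X ^ (i.1 + j.1))) *
      (Matrix.of fun i j : Fin n => (q j).coeff i) := by
    ext i j
    have e : ∀ (g : ℕ → ℤ[X]) (_ : ∀ i, (g i).natDegree = i) (i : Fin n),
        g i = ∑ r : Fin n, (g i).coeff r • (X : ℤ[X]) ^ (r : ℕ) := by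
      intro g hg i
      conv_lhs => rw [(g i).as_sum_range' n (by rw [hg]; exact i.2)]
      rw [Finset.sum_range]
      apply Finset.sum_congr rfl
      intro r _
      rw [smul_X_eq_monomial]
    rw [Matrix.of_apply]
    conv_lhs => rw [e f hf' i, e q hq' j]
    simp only [Matrix.mul_apply, Matrix.transpose_apply, Matrix.of_apply,
      Finset.mul_sum, Finset.sum_mul, map_sum]
    apply Finset.sum_congr rfl
    intro s _
    apply Finset.sum_congr rfl
    intro r _
    rw [smul_mul_smul_comm, map_smul, ← pow_add, smul_eq_mul]; ring
  rw [h, Matrix.det_mul, Matrix.det_mul, Matrix.det_transpose,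
    Matrix.det_matrixOfPolynomials (fun j : Fin n => f j) (fun i => hf' i) (fun i => hf i),
    Matrix.det_matrixOfPolynomials (fun j : Fin n => q j) (fun i => hq' i) (fun i => hq i)]
  ring

/-- three-term recursion -/
def rec3 (c s : ℤ[X]) : ℕ → ℤ[X]
  | 0 => 1
  | 1 => s
  | (a + 2) => c * rec3 c s (a + 1) - rec3 c s a

lemma rec3_monic (c s : ℤ[X]) (K : ℕ) (hK : 0 < K) (hc : c.Monic) (hc' : c.natDegree = K)
    (hs : s.Monic) (hs' : s.natDegree = K) (a : ℕ) :
    (rec3 c s a).Monic ∧ (rec3 c s a).natDegree = a * K := by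
  induction a using Nat.twoStepInduction with
  | zero => simp [rec3]
  | one => simp [rec3, hs, hs']
  | more a h1 h2 =>
    have m := hc.mul h2.1
    have d : (c * rec3 c s (a + 1)).natDegree = (a + 2) * K := by
      rw [hc.natDegree_mul h2.1, hc', h2.2]; ring
    have lt : (rec3 c s a).natDegree < (c * rec3 c s (a + 1)).natDegree := by
      rw [d, h1.2]; nlinarith
    have lt' := degree_lt_degree lt
    refine ⟨?_, ?_⟩
    · rw [rec3]; exact m.sub_of_left lt'
    · rw [rec3, natDegree_sub_eq_left_of_natDegree_lt lt, d]

lemma lin_monic (a : ℤ) : (X - Polynomial.C a : ℤ[X]).Monic ∧ (X - Polynomial.C a : ℤ[X]).natDegree = 1 :=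
  ⟨monic_X_sub_C a, natDegree_X_sub_C a⟩

def P : ℕ → ℤ[X] := rec3 (X - Polynomial.C 2) (X - Polynomial.C 3)
def S : ℕ → ℤ[X] := rec3 (X - Polynomial.C 2) (X - Polynomial.C 1)
def CC (k : ℕ) : ℤ[X] := S (k + 1) - S k
def G (k : ℕ) : ℕ → ℤ[X] := rec3 (CC k) (CC k)

lemma P_monic (a : ℕ) : (P a).Monic ∧ (P a).natDegree = a := by
  have := rec3_monic _ _ 1 one_pos (lin_monic 2).1 (lin_monic 2).2 (lin_monic 3).1
    (lin_monic 3).2 a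
  rw [mul_one] at this; exact this
lemma S_monic (a : ℕ) : (S a).Monic ∧ (S a).natDegree = a := by
  have := rec3_monic _ _ 1 one_pos (lin_monic 2).1 (lin_monic 2).2 (lin_monic 1).1
    (lin_monic 1).2 a
  rw [mul_one] at this; exact this
lemma CC_monic (k : ℕ) : (CC k).Monic ∧ (CC k).natDegree = k + 1 := by
  have lt : (S k).natDegree < (S (k + 1)).natDegree := by
    rw [(S_monic _).2, (S_monic _).2]; omega
  refine ⟨(S_monic _).1.sub_of_left (degree_lt_degree lt), ?_⟩
  rw [CC, natDegree_sub_eq_left_of_natDegree_lt lt, (S_monic _).2]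
lemma G_monic (k a : ℕ) : (G k a).Monic ∧ (G k a).natDegree = a * (k + 1) :=
  rec3_monic _ _ (k + 1) k.succ_pos (CC_monic k).1 (CC_monic k).2 (CC_monic k).1
    (CC_monic k).2 a

lemma T_inv : (T 1 * T (-1) : ℤ[T;T⁻¹]) = 1 := by rw [← T_add]; simp

lemma phi_lin (a : ℤ) : phi (X - Polynomial.C a) = T 1 + 2 + T (-1) - (a : ℤ[T;T⁻¹]) := by
  rw [map_sub, phi_X, ← algebraMap_eq, AlgHom.commutes]; simp

lemma phi_P (a : ℕ) : phi (P a) * (1 + T 1) = T (a + 1) + T (-(a : ℤ)) := by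
  induction a using Nat.twoStepInduction with
  | zero => simp [P, rec3]; ring
  | one =>
    simp only [P, rec3, phi_lin]
    push_cast
    have : (T 2 : ℤ[T;T⁻¹]) = T 1 * T 1 := by rw [← T_add]; norm_num
    rw [this]
    linear_combination T_inv
  | more a h1 h2 =>
    have : phi (P (a + 2)) = (T 1 + T (-1)) * phi (P (a + 1)) - phi (P a) := by
      simp only [P, rec3, map_sub phi (_ * _), map_mul, phi_lin]
      push_cast; ring
    rw [this, sub_mul, mul_assoc, h1, h2]
    rw [show ((a + 2 : ℕ) : ℤ) = a + 1 + 1 by push_cast; ring,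
      show ((a + 1 : ℕ) : ℤ) = a + 1 by push_cast; ring]
    simp only [neg_add, T_add]
    linear_combination (T (a : ℤ) * T 1 + T (-(a : ℤ))) * T_inv

lemma phi_S (a : ℕ) : phi (S a) * (T 1 - 1) = T (a + 1) - T (-(a : ℤ)) := by
  induction a using Nat.twoStepInduction with
  | zero => simp [S, rec3]
  | one =>
    simp only [S, rec3, phi_lin]
    push_cast
    have : (T 2 : ℤ[T;T⁻¹]) = T 1 * T 1 := by rw [← T_add]; norm_num
    rw [this]
    linear_combination T_inv
  | more a h1 h2 =>
    have : phi (S (a + 2)) = (T 1 + T (-1)) * phi (S (a + 1)) - phi (S a) := by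
      simp only [S, rec3, map_sub phi (_ * _), map_mul, phi_lin]
      push_cast; ring
    rw [this, sub_mul, mul_assoc, h1, h2]
    rw [show ((a + 2 : ℕ) : ℤ) = a + 1 + 1 by push_cast; ring,
      show ((a + 1 : ℕ) : ℤ) = a + 1 by push_cast; ring]
    simp only [neg_add, T_add]
    linear_combination (T (a : ℤ) * T 1 - T (-(a : ℤ))) * T_inv

lemma T_ne : (T 1 - 1 : ℤ[T;T⁻¹]) ≠ 0 := by
  intro h
  have := congrArg (fun f => ct (T (-1) * f)) h
  simp only [mul_sub, ← T_add, mul_one, map_sub, ct_T, mul_zero, map_zero] at this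
  norm_num at this

lemma phi_CC (k : ℕ) : phi (CC k) = T ((k : ℤ) + 1) + T (-((k : ℤ) + 1)) := by
  apply mul_right_cancel₀ T_ne
  rw [CC, map_sub, sub_mul, phi_S, phi_S]
  push_cast
  simp only [neg_add, T_add]
  linear_combination (-T (-(k : ℤ))) * T_inv

lemma phi_G (k a : ℕ) : phi (G k a) * (T ((k : ℤ) + 1) - T (-((k : ℤ) + 1))) =
    T (((k : ℤ) + 1) * (a + 1)) - T (-(((k : ℤ) + 1) * (a + 1))) := by
  have hi : (T ((k : ℤ) + 1) * T (-((k : ℤ) + 1)) : ℤ[T;T⁻¹]) = 1 := by rw [← T_add]; simp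
  induction a using Nat.twoStepInduction with
  | zero => simp [G, rec3]
  | one =>
    have h1 : ((k : ℤ) + 1) * ((1 : ℕ) + 1) = ((k : ℤ) + 1) + ((k : ℤ) + 1) := by push_cast; ring
    rw [h1, neg_add ((k : ℤ) + 1), T_add ((k : ℤ) + 1), T_add (-((k : ℤ) + 1))]
    simp only [G, rec3, phi_CC]
    ring
  | more a h1 h2 =>
    have : phi (G k (a + 2)) = phi (CC k) * phi (G k (a + 1)) - phi (G k a) := by
      simp only [G, rec3, map_sub, map_mul]
    rw [this, sub_mul, mul_assoc, h1, h2, phi_CC]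
    have e1 : ((k : ℤ) + 1) * ((a + 1 : ℕ) + 1) = ((k : ℤ) + 1) * (a + 1) + ((k : ℤ) + 1) := by
      push_cast; ring
    have e2 : ((k : ℤ) + 1) * ((a + 2 : ℕ) + 1) =
        ((k : ℤ) + 1) * (a + 1) + ((k : ℤ) + 1) + ((k : ℤ) + 1) := by
      push_cast; ring
    rw [e1, e2]
    generalize ((k : ℤ) + 1) * (a + 1) = A at *
    rw [neg_add (A + _), neg_add A, T_add (A + _), T_add (-A + _), T_add A, T_add (-A)]
    linear_combination (T A - T (-A)) * hi

lemma phi_G_E (k a : ℕ) : phi (G k a) * E (k + 1) = E ((k + 1) * (a + 1)) := by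
  apply mul_right_cancel₀ T_ne
  rw [mul_assoc, E_mul, E_mul]
  push_cast
  exact phi_G k a

/-- row basis -/
def f (k i : ℕ) : ℤ[X] := P (i % (k + 1)) * G k (i / (k + 1))
/-- column basis -/
def q : ℕ → ℤ[X]
  | 0 => 1
  | (j + 1) => (X - Polynomial.C 4) * S j

lemma f_monic (k i : ℕ) : (f k i).Monic ∧ (f k i).natDegree = i := by
  refine ⟨(P_monic _).1.mul (G_monic k _).1, ?_⟩
  rw [f, (P_monic _).1.natDegree_mul (G_monic k _).1, (P_monic _).2, (G_monic k _).2, mul_comm]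
  exact Nat.mod_add_div _ _

lemma q_monic (j : ℕ) : (q j).Monic ∧ (q j).natDegree = j := by
  cases j with
  | zero => simp [q]
  | succ j =>
    refine ⟨(lin_monic 4).1.mul (S_monic _).1, ?_⟩
    rw [q, (lin_monic 4).1.natDegree_mul (S_monic _).1, (lin_monic 4).2, (S_monic _).2, add_comm]

lemma ct_T_E (N : ℕ) (a : ℤ) (h1 : a ≤ N) (h2 : -(N : ℤ) < a) : ct (T a * E N) = 1 := by
  rw [E, Finset.mul_sum, map_sum, Finset.sum_eq_single (-a)]
  · rw [← T_add, ct_T]; simp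
  · intro b _ hb
    rw [← T_add, ct_T, if_neg (by omega)]
  · intro h; simp only [Finset.mem_Ico] at h; omega

lemma L_col0 (k i : ℕ) : L (k + 1) (f k i * q 0) = 1 := by
  have h : 2 * L (k + 1) (f k i * q 0) = 2 := by
    rw [two_L, q, mul_one, f, map_mul phi]
    have : ∀ a b c d : ℤ[T;T⁻¹], a * b * c * d = (a * c) * (b * d) := by intros; ring
    rw [this, phi_P, phi_G_E, add_mul, map_add]
    have hb : i % (k + 1) < k + 1 := Nat.mod_lt _ k.succ_pos
    have : k + 1 ≤ (k + 1) * (i / (k + 1) + 1) := Nat.le_mul_of_pos_right _ (Nat.succ_pos _)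
    rw [ct_T_E, ct_T_E]
    · rfl
    all_goals omega
  omega

set_option maxHeartbeats 1000000 in
lemma L_col (k i j : ℕ) : L (k + 1) (f k i * q (j + 1)) =
    -((if j = (k + 1) * (i / (k + 1) + 1) + i % (k + 1) then 1 else 0) +
      (if j + 1 + i % (k + 1) = (k + 1) * (i / (k + 1) + 1) then 1 else 0)) := by
  have hb : i % (k + 1) < k + 1 := Nat.mod_lt _ k.succ_pos
  have hA : k + 1 ≤ (k + 1) * (i / (k + 1) + 1) := Nat.le_mul_of_pos_right _ (Nat.succ_pos _)
  have h : 2 * L (k + 1) (f k i * q (j + 1)) = ct (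
      (T (((i % (k + 1) : ℕ) : ℤ) + 1) + T (-((i % (k + 1) : ℕ) : ℤ))) *
      (T (((k + 1) * (i / (k + 1) + 1) : ℕ) : ℤ) - T (-(((k + 1) * (i / (k + 1) + 1) : ℕ) : ℤ))) *
      (T (j : ℤ) - T (-(j : ℤ) - 1))) := by
    rw [two_L, q, f, map_mul phi, map_mul phi, map_mul phi]
    congr 1
    have h4 : phi (X - Polynomial.C 4) = (T 1 - 1) * (T 1 - 1) * T (-1) := by
      rw [phi_lin]; push_cast
      linear_combination (2 - T 1) * T_inv
    have hP := phi_P (i % (k + 1))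
    have hE := E_mul ((k + 1) * (i / (k + 1) + 1))
    rw [← phi_G_E] at hE
    have hS : phi (S j) * (T 1 - 1) * T (-1) = T (j : ℤ) - T (-(j : ℤ) - 1) := by
      rw [phi_S, sub_mul, ← T_add, ← T_add]; simp [sub_eq_add_neg]
    rw [← hP, ← hE, ← hS, h4]
    ring
  generalize (k + 1) * (i / (k + 1) + 1) = A at *
  generalize i % (k + 1) = b at *
  simp only [mul_sub, sub_mul, add_mul, ← T_add, map_sub, map_add, ct_T] at h
  split_ifs at * <;> omega

end
end HK
namespace HK

/-- entries of the reduced matrix -/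
def ent (k i j : ℕ) : ℤ := if j = 0 then 1 else
    -((if j = (k + 1) * (i / (k + 1) + 1) + i % (k + 1) + 1 then 1 else 0) +
      (if j + i % (k + 1) = (k + 1) * (i / (k + 1) + 1) then 1 else 0))

def D (k n : ℕ) : Matrix (Fin n) (Fin n) ℤ := Matrix.of fun i j => ent k i j

lemma ent_last (k m c j : ℕ) (hc : c ≤ k) (hj : j + c < (k + 1) * (m + 1)) :
    ent k ((k + 1) * m + c) j = if j = 0 then 1 else 0 := by
  have h1 : ((k + 1) * m + c) / (k + 1) = m := by
    rw [Nat.mul_add_div k.succ_pos, Nat.div_eq_of_lt (by omega)]; simp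
  have h2 : ((k + 1) * m + c) % (k + 1) = c := by
    rw [Nat.mul_add_mod, Nat.mod_eq_of_lt (by omega)]
  unfold ent
  rw [h1, h2]
  generalize (k + 1) * (m + 1) = A at *
  split_ifs <;> omega

lemma D_zero (k n : ℕ) (h0 : n % (k + 1) ≠ 0) (h1 : n % (k + 1) ≠ 1) : (D k n).det = 0 := by
  have hn := Nat.div_add_mod n (k + 1)
  have hl : n % (k + 1) < k + 1 := Nat.mod_lt _ k.succ_pos
  set m := n / (k + 1)
  set r := n % (k + 1)
  have e : (k + 1) * (m + 1) = (k + 1) * m + (k + 1) := by ring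
  apply Matrix.det_zero_of_row_eq (i := ⟨(k + 1) * m + 0, by omega⟩)
    (j := ⟨(k + 1) * m + 1, by omega⟩)
  · simp
  · ext j
    have := j.2
    simp only [D, Matrix.of_apply]
    rw [ent_last _ _ _ _ (by omega) (by omega), ent_last _ _ _ _ (by omega) (by omega)]

/-- antidiagonal determinant -/
lemma det_anti (K : ℕ) :
    (Matrix.of fun i j : Fin K => if i.1 + j.1 + 1 = K then (1 : ℤ) else 0).det =
      (-1) ^ (K.choose 2) := by
  induction K with
  | zero => simp
  | succ K ih =>
    rw [Matrix.det_succ_row _ 0, Finset.sum_eq_single (Fin.last K)]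
    · have : (Matrix.of fun i j : Fin (K + 1) =>
          if i.1 + j.1 + 1 = K + 1 then (1 : ℤ) else 0).submatrix
          (Fin.succAbove 0) (Fin.succAbove (Fin.last K)) =
          (Matrix.of fun i j : Fin K => if i.1 + j.1 + 1 = K then (1 : ℤ) else 0) := by
        ext i j
        simp only [Matrix.submatrix_apply, Matrix.of_apply, Fin.zero_succAbove,
          Fin.succAbove_last, Fin.val_succ, Fin.val_castSucc]
        apply if_congr _ rfl rfl
        omega
      rw [this, ih]
      simp [Nat.choose_succ_succ', pow_add]
    · intro j _ hj
      have : j.1 ≠ K := fun h => hj (Fin.ext h)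
      simp [this]
    · simp

/-- the block bidiagonal part -/
lemma det_block (k m : ℕ) :
    (Matrix.of fun i j : Fin (m * (k + 1)) => ent k i (j + 1)).det =
      ((-1) ^ (k + 1) * (-1) ^ ((k + 1).choose 2)) ^ m := by
  rw [← Matrix.det_submatrix_equiv_self (finProdFinEquiv (m := m) (n := k + 1))]
  set N := (Matrix.of fun i j : Fin (m * (k + 1)) => ent k i (j + 1)).submatrix
    (finProdFinEquiv (m := m) (n := k + 1)) (finProdFinEquiv (m := m) (n := k + 1)) with hN
  have hent : ∀ (a a' : Fin m) (b b' : Fin (k + 1)), N (a, b) (a', b') =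
      -((if a'.1 = a.1 + 1 ∧ b'.1 = b.1 then 1 else 0) +
        (if a'.1 = a.1 ∧ b.1 + b'.1 + 1 = k + 1 then 1 else 0)) := by
    intro a a' b b'
    simp only [hN, Matrix.submatrix_apply, Matrix.of_apply, finProdFinEquiv_apply_val, ent]
    have hb := b.2
    have hb' := b'.2
    have h1 : (b.1 + (k + 1) * a.1) / (k + 1) = a.1 := by
      rw [Nat.add_mul_div_left _ _ k.succ_pos, Nat.div_eq_of_lt hb]; simp
    have h2 : (b.1 + (k + 1) * a.1) % (k + 1) = b.1 := by
      rw [Nat.add_mul_mod_self_left, Nat.mod_eq_of_lt hb]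
    rw [h1, h2, if_neg (by omega)]
    congr 2
    · apply if_congr _ rfl rfl
      constructor
      · intro h
        have h' : b'.1 + (k + 1) * a'.1 = b.1 + (k + 1) * (a.1 + 1) := by omega
        have e1 := congrArg (· / (k + 1)) h'
        have e2 := congrArg (· % (k + 1)) h'
        simp only [Nat.add_mul_div_left _ _ k.succ_pos, Nat.div_eq_of_lt hb,
          Nat.div_eq_of_lt hb', Nat.add_mul_mod_self_left, Nat.mod_eq_of_lt hb,
          Nat.mod_eq_of_lt hb'] at e1 e2
        omega
      · rintro ⟨h, h'⟩; rw [h, h']; ring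
    · apply if_congr _ rfl rfl
      constructor
      · intro h
        have h' : b'.1 + (k + 1) * a'.1 = (k - b.1) + (k + 1) * a.1 := by
          rw [mul_add] at h; omega
        have hb2 : k - b.1 < k + 1 := by omega
        have e1 := congrArg (· / (k + 1)) h'
        have e2 := congrArg (· % (k + 1)) h'
        simp only [Nat.add_mul_div_left _ _ k.succ_pos, Nat.div_eq_of_lt hb2,
          Nat.div_eq_of_lt hb', Nat.add_mul_mod_self_left, Nat.mod_eq_of_lt hb2,
          Nat.mod_eq_of_lt hb'] at e1 e2
        omega
      · rintro ⟨h, h'⟩; rw [h, mul_add]; omega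
  have htri : N.BlockTriangular Prod.fst := by
    rintro ⟨a, b⟩ ⟨a', b'⟩ h
    have h : a'.1 < a.1 := h
    rw [hent, if_neg (by omega), if_neg (by omega)]; simp
  rw [htri.det_fintype]
  have hblk : ∀ a : Fin m, (N.toSquareBlock Prod.fst a).det =
      (-1) ^ (k + 1) * (-1) ^ ((k + 1).choose 2) := by
    intro a
    let e : Fin (k + 1) ≃ {x : Fin m × Fin (k + 1) // x.1 = a} :=
      { toFun := fun b => ⟨(a, b), rfl⟩
        invFun := fun x => x.1.2
        left_inv := fun b => rfl
        right_inv := by rintro ⟨⟨a', b⟩, h⟩; subst h; rfl }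
    rw [← Matrix.det_submatrix_equiv_self e]
    have : (N.toSquareBlock Prod.fst a).submatrix e e =
        -(Matrix.of fun i j : Fin (k + 1) => if i.1 + j.1 + 1 = k + 1 then (1 : ℤ) else 0) := by
      ext b b'
      change N (a, b) (a, b') = _
      rw [hent, if_neg (by omega)]
      simp
    rw [this, Matrix.det_neg, det_anti]
    simp
  simp [hblk]

lemma D_one (k m : ℕ) : (D k (m * (k + 1) + 1)).det = (-1) ^ (m * (k + 1).choose 2) := by
  rw [Matrix.det_succ_row _ (Fin.last _), Finset.sum_eq_single 0]
  · have : (D k (m * (k + 1) + 1)).submatrix (Fin.last _).succAbove (Fin.succAbove 0) =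
        (Matrix.of fun i j : Fin (m * (k + 1)) => ent k i (j + 1)) := by
      ext i j
      simp [D]
    rw [this, det_block]
    have h1 : D k (m * (k + 1) + 1) (Fin.last _) 0 = 1 := by simp [D, ent]
    rw [h1, mul_pow, ← pow_mul, ← pow_mul]
    simp only [Fin.val_last, Fin.val_zero, add_zero, mul_one]
    rw [← mul_assoc, mul_comm m (k + 1), ← mul_pow, mul_comm m]
    norm_num
  · intro j _ hj
    have hj0 : j.1 ≠ 0 := fun h => hj (Fin.ext h)
    have : D k (m * (k + 1) + 1) (Fin.last _) j = 0 := by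
      simp only [D, Matrix.of_apply, Fin.val_last]
      have h := ent_last k m 0 j (by omega) (by have := j.2; nlinarith)
      rw [add_zero, mul_comm] at h
      rw [h, if_neg hj0]
    rw [this]; simp
  · simp

lemma D_step (k m : ℕ) : (D k ((m + 1) * (k + 1) + 1)).det = (D k ((m + 1) * (k + 1))).det := by
  set N := (m + 1) * (k + 1) with hNdef
  have hN' : N = (k + 1) * m + (k + 1) := by rw [hNdef]; ring
  have hlt : (k + 1) * m < N := by omega
  let r : Fin (N + 1) := ⟨(k + 1) * m, by omega⟩
  have hr : r ≠ Fin.last N := by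
    intro h; have := congrArg Fin.val h; simp [r] at this; omega
  have hlast : ∀ j : Fin (N + 1), D k (N + 1) (Fin.last N) j = if j.1 = 0 then 1 else 0 := by
    intro j
    have h := ent_last k (m + 1) 0 j (by omega) (by have := j.2; nlinarith)
    rw [add_zero, mul_comm] at h
    simpa [D, hNdef] using h
  have hrow : ∀ j : Fin (N + 1), D k (N + 1) r j =
      (if j.1 = 0 then 1 else 0) - (if j.1 = N then 1 else 0) := by
    intro j
    have := j.2
    by_cases hj : j.1 = N
    · have h1 : ((k + 1) * m) / (k + 1) = m := Nat.mul_div_cancel_left _ k.succ_pos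
      simp only [D, Matrix.of_apply, r, ent, hj]
      rw [h1, Nat.mul_mod_right]
      rw [mul_add (k + 1) m 1, if_neg (by omega), if_neg (by omega), if_pos (by omega),
        if_neg (by omega), if_pos trivial]
      rfl
    · have h := ent_last k m 0 j (by omega) (by rw [mul_add]; omega)
      simp only [add_zero] at h
      simp [D, r, h, hj]
  rw [← Matrix.det_updateRow_add_smul_self (D k (N + 1)) hr (-1)]
  set M := (D k (N + 1)).updateRow r (D k (N + 1) r + (-1 : ℤ) • D k (N + 1) (Fin.last N)) with hM
  have hs := Matrix.det_permute (Equiv.swap r (Fin.last N)) M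
  rw [Equiv.Perm.sign_swap hr] at hs
  have hMd : M.det = -(M.submatrix (Equiv.swap r (Fin.last N)) id).det := by
    rw [hs]; simp
  rw [hMd, Matrix.det_succ_row _ (Fin.last N)]
  have hMr : ∀ j : Fin (N + 1), M r j = if j.1 = N then -1 else 0 := by
    intro j
    rw [hM, Matrix.updateRow_self]
    simp only [Pi.add_apply, Pi.smul_apply, hrow, hlast]
    split_ifs <;> simp
  rw [Finset.sum_eq_single (Fin.last N)]
  · have : (M.submatrix (Equiv.swap r (Fin.last N)) id).submatrix
        (Fin.last N).succAbove (Fin.last N).succAbove = D k N := by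
      ext i j
      simp only [Matrix.submatrix_apply, Fin.succAbove_last, id]
      by_cases hi : i.castSucc = r
      · rw [hi, Equiv.swap_apply_left, hM, Matrix.updateRow_ne hr.symm, hlast]
        have hi' : i.1 = (k + 1) * m := congrArg Fin.val hi
        have h := ent_last k m 0 j (by omega) (by have := j.2; rw [mul_add]; omega)
        rw [add_zero] at h
        simp [D, hi', h]
      · rw [Equiv.swap_apply_of_ne_of_ne hi (Fin.castSucc_lt_last i).ne, hM,
          Matrix.updateRow_ne hi]
        simp [D]
    rw [this]
    have h2 : (M.submatrix (Equiv.swap r (Fin.last N)) id) (Fin.last N) (Fin.last N) = -1 := by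
      simp [hMr]
    rw [h2]
    simp [← two_mul]
  · intro j _ hj
    have : j.1 ≠ N := fun h => hj (Fin.ext h)
    simp [hMr, this]
  · simp

end HK

namespace HK

lemma hankel_eq (n k : ℕ) :
    (Matrix.of fun i j : Fin n =>
        ∑ l ∈ Finset.Icc (-(k : ℤ)) ((k : ℤ) + 1),
          chz (2 * (i.1 : ℤ) + 2 * j.1) ((i.1 : ℤ) + j.1 + l)).det = (D k n).det := by
  have h := det_change n (L (k + 1)) (f k) q (fun i => (f_monic k i).1) (fun i => (f_monic k i).2)
    (fun i => (q_monic i).1) (fun i => (q_monic i).2)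
  have e1 : (Matrix.of fun i j : Fin n =>
        ∑ l ∈ Finset.Icc (-(k : ℤ)) ((k : ℤ) + 1),
          chz (2 * (i.1 : ℤ) + 2 * j.1) ((i.1 : ℤ) + j.1 + l)) =
      Matrix.of fun i j : Fin n => L (k + 1) (Polynomial.X ^ (i.1 + j.1)) := by
    ext i j
    simp only [Matrix.of_apply, L_X_pow]
    push_cast
    simp only [mul_add]
  have e2 : (Matrix.of fun i j : Fin n => L (k + 1) (f k i * q j)) = D k n := by
    ext i j
    simp only [Matrix.of_apply, D, ent]
    rcases j with ⟨_ | j, hj⟩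
    · simp only [L_col0, if_true]
    · simp only [L_col]
      rw [if_neg (Nat.succ_ne_zero j)]
      simp only [add_left_inj]
  rw [e1, h, e2]

end HK

theorem hankel_det_sum_central_binomials (n k : ℕ) (hn : 0 < n) :
    (∀ n₁ : ℕ, n = (k + 1) * n₁ ∨ n = (k + 1) * n₁ + 1 →
      (Matrix.of fun i j : Fin n =>
        ∑ l ∈ Finset.Icc (-(k : ℤ)) ((k : ℤ) + 1),
          chz (2 * (i.1 : ℤ) + 2 * j.1) ((i.1 : ℤ) + j.1 + l)).det =
        (-1) ^ (n₁ * Nat.choose (k + 1) 2)) ∧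
    (n % (k + 1) ≠ 0 ∧ n % (k + 1) ≠ 1 →
      (Matrix.of fun i j : Fin n =>
        ∑ l ∈ Finset.Icc (-(k : ℤ)) ((k : ℤ) + 1),
          chz (2 * (i.1 : ℤ) + 2 * j.1) ((i.1 : ℤ) + j.1 + l)).det = 0) := by
  rw [HK.hankel_eq]
  refine ⟨?_, fun h => HK.D_zero k n h.1 h.2⟩
  rintro n₁ (h | h)
  · cases n₁ with
    | zero => omega
    | succ m =>
      rw [h, mul_comm (k + 1), ← HK.D_step, HK.D_one]
  · rw [h, mul_comm (k + 1), HK.D_one]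
end
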